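/- Fix 0 < R < Q and s > 0, and suppose c > 0 satisfies c + s > Q, s − c < R, and c − s < R. For r ∈ {R,Q} define y_r(c) to be the maximum of the second coordinates of points of C(O,r) ∩ C(p_c,s) (these intersections are nonempty under the hypotheses). Then: y_R(c) = y_Q(c) if and only if c² + s² = (R² + Q²)/2; y_R(c) > y_Q(c) if and only if c² + s² < (R² + Q²)/2; and y_R(c) < y_Q(c) if and only if c² + s² > (R² + Q²)/2. -/

import Mathlib

open Set Metric

/-- The point `(c, 0)` in the Euclidean plane. -/
noncomputable def pc (c : ℝ) : EuclideanSpace ℝ (Fin 2) :=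
  (WithLp.equiv 2 (Fin 2 → ℝ)).symm ![c, 0]

/-!
Let `x` be the common abscissa of the points of `C(O, r) ∩ C((c, 0), s)`; their ordinates are
`±√(r² - x²)`. The quantity `r² - x²` is quadratic in `r²`, so its difference between `r = R` and
`r = Q` has the factor `Q² - R² > 0`; the other factor is a positive multiple of
`(R² + Q²) / 2 - (c² + s²)`, whose sign therefore decides the comparison.
-/

section CommonChord

/-- The abscissa of the radical axis of the circles `C(O, r)` and `C((c, 0), s)`, i.e. the common
first coordinate of their intersection points. Junk value `0` when `c = 0`. -/
noncomputable def radicalAbscissa (c r s : ℝ) : ℝ :=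
  (c ^ 2 + r ^ 2 - s ^ 2) / (2 * c)

/-- The square of half the length of the common chord of `C(O, r)` and `C((c, 0), s)`. For `c ≠ 0`
and `r, s ≥ 0` it is negative exactly when the circles do not meet. -/
noncomputable def halfChordSq (c r s : ℝ) : ℝ :=
  r ^ 2 - radicalAbscissa c r s ^ 2

/-- Half the length of the common chord of `C(O, r)` and `C((c, 0), s)`, written `y_r(c)` in the
paper. For `c ≠ 0` and `r, s ≥ 0` it has the junk value `0` when the circles do not meet. -/
noncomputable def halfChord (c r s : ℝ) : ℝ :=
  √(halfChordSq c r s)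

variable {c r s : ℝ}

theorem mem_sphere_zero_inter_sphere_pc (hr : 0 ≤ r) (hs : 0 ≤ s)
    {p : EuclideanSpace ℝ (Fin 2)} :
    p ∈ sphere 0 r ∩ sphere (pc c) s ↔
      p 0 ^ 2 + p 1 ^ 2 = r ^ 2 ∧ (p 0 - c) ^ 2 + p 1 ^ 2 = s ^ 2 := by
  rw [mem_inter_iff, mem_sphere, mem_sphere, ← sq_eq_sq₀ dist_nonneg hr,
    ← sq_eq_sq₀ dist_nonneg hs, EuclideanSpace.dist_sq_eq, EuclideanSpace.dist_sq_eq]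
  simp [Fin.sum_univ_two, pc, Real.dist_eq, sq_abs]

theorem mem_sphere_zero_inter_sphere_pc_iff_radicalAbscissa (hc : c ≠ 0) (hr : 0 ≤ r)
    (hs : 0 ≤ s) {p : EuclideanSpace ℝ (Fin 2)} :
    p ∈ sphere 0 r ∩ sphere (pc c) s ↔
      p 0 = radicalAbscissa c r s ∧ p 1 ^ 2 = halfChordSq c r s := by
  rw [mem_sphere_zero_inter_sphere_pc hr hs, halfChordSq]
  have eq_radicalAbscissa_iff :
      p 0 = radicalAbscissa c r s ↔ p 0 * (2 * c) = c ^ 2 + r ^ 2 - s ^ 2 :=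
    eq_div_iff (mul_ne_zero two_ne_zero hc)
  constructor
  · rintro ⟨h_zero, h_pc⟩
    have h_abscissa := eq_radicalAbscissa_iff.2 (by linarith)
    exact ⟨h_abscissa, by rw [← h_abscissa]; linarith⟩
  · rintro ⟨h_abscissa, h_ordinate⟩
    rw [← h_abscissa] at h_ordinate
    have h_radical_axis := eq_radicalAbscissa_iff.1 h_abscissa
    constructor <;> linarith

theorem isGreatest_halfChord (hc : c ≠ 0) (hr : 0 ≤ r) (hs : 0 ≤ s)
    (h : 0 ≤ halfChordSq c r s) :
    IsGreatest ((fun p : EuclideanSpace ℝ (Fin 2) => p 1) '' (sphere 0 r ∩ sphere (pc c) s))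
      (halfChord c r s) := by
  have mem_iff {p : EuclideanSpace ℝ (Fin 2)} :=
    mem_sphere_zero_inter_sphere_pc_iff_radicalAbscissa hc hr hs (p := p)
  constructor
  · exact ⟨!₂[radicalAbscissa c r s, halfChord c r s], mem_iff.2 ⟨rfl, Real.sq_sqrt h⟩, rfl⟩
  · rintro _ ⟨p, hp, rfl⟩
    exact Real.le_sqrt_of_sq_le (mem_iff.1 hp).2.le

/-- Heron's formula for the triangle with sides `c`, `r`, `s`, whose altitude onto the side `c` is
the half-chord. -/
theorem halfChordSq_eq_heron (hc : c ≠ 0) :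
    halfChordSq c r s =
      (c + r + s) * (c + s - r) * (c + r - s) * (r + s - c) / (2 * c) ^ 2 := by
  unfold halfChordSq radicalAbscissa
  field_simp
  ring

theorem halfChordSq_nonneg (hc : c ≠ 0) (hr : r ≤ c + s) (hs : s ≤ c + r)
    (hcrs : c ≤ r + s) : 0 ≤ halfChordSq c r s := by
  have h_perimeter : 0 ≤ c + r + s := by linarith
  rw [halfChordSq_eq_heron hc]
  have := sub_nonneg.2 hr
  have := sub_nonneg.2 hs
  have := sub_nonneg.2 hcrs
  positivity

theorem sSup_snd_image_eq_halfChord (hc : c ≠ 0) (hr : r ≤ c + s) (hs : s ≤ c + r)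
    (hcrs : c ≤ r + s) :
    sSup ((fun p : EuclideanSpace ℝ (Fin 2) => p 1) '' (sphere 0 r ∩ sphere (pc c) s)) =
      halfChord c r s :=
  (isGreatest_halfChord hc (by linarith) (by linarith)
    (halfChordSq_nonneg hc hr hs hcrs)).csSup_eq

theorem halfChordSq_sub_halfChordSq (hc : c ≠ 0) (R Q : ℝ) :
    halfChordSq c R s - halfChordSq c Q s =
      (Q ^ 2 - R ^ 2) / (2 * c ^ 2) * ((R ^ 2 + Q ^ 2) / 2 - (c ^ 2 + s ^ 2)) := by
  unfold halfChordSq radicalAbscissa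
  field_simp
  ring

theorem cmp_halfChord {R Q : ℝ} (hc : c ≠ 0) (hRQ : R ^ 2 < Q ^ 2)
    (hR : 0 ≤ halfChordSq c R s) (hQ : 0 ≤ halfChordSq c Q s) :
    cmp (halfChord c R s) (halfChord c Q s) = cmp ((R ^ 2 + Q ^ 2) / 2) (c ^ 2 + s ^ 2) := by
  have h_factor : 0 < (Q ^ 2 - R ^ 2) / (2 * c ^ 2) :=
    div_pos (sub_pos.2 hRQ) (by positivity)
  calc cmp (halfChord c R s) (halfChord c Q s)
    _ = cmp (halfChordSq c R s) (halfChordSq c Q s) :=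
      Real.strictMonoOn_sqrt.cmp_map_eq hR hQ
    _ = cmp ((Q ^ 2 - R ^ 2) / (2 * c ^ 2) * ((R ^ 2 + Q ^ 2) / 2 - (c ^ 2 + s ^ 2))) 0 := by
      rw [← cmp_sub_zero, halfChordSq_sub_halfChordSq hc]
    _ = cmp ((R ^ 2 + Q ^ 2) / 2 - (c ^ 2 + s ^ 2)) 0 := by
      simpa only [mul_zero] using cmp_mul_pos_left h_factor _ 0
    _ = cmp ((R ^ 2 + Q ^ 2) / 2) (c ^ 2 + s ^ 2) := cmp_sub_zero _ _

end CommonChord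

/-- Under the hypotheses `c + s > Q`, `s - c < R`, `c - s < R`, the maximal
second coordinates `y_R`, `y_Q` of the intersections `C(O,R) ∩ C((c,0),s)` and
`C(O,Q) ∩ C((c,0),s)` compare to each other exactly as `c² + s²` compares to `(R² + Q²)/2`. -/
theorem yR_yQ_comparison
    (R Q s c : ℝ) (hR : 0 < R) (hRQ : R < Q) (hs : 0 < s) (hc : 0 < c)
    (h1 : Q < c + s) (h2 : s - c < R) (h3 : c - s < R)
    (yR yQ : ℝ)
    (hyR : yR = sSup ((fun p : EuclideanSpace ℝ (Fin 2) => p 1) ''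
      (sphere (0 : EuclideanSpace ℝ (Fin 2)) R ∩ sphere (pc c) s)))
    (hyQ : yQ = sSup ((fun p : EuclideanSpace ℝ (Fin 2) => p 1) ''
      (sphere (0 : EuclideanSpace ℝ (Fin 2)) Q ∩ sphere (pc c) s))) :
    (yR = yQ ↔ c ^ 2 + s ^ 2 = (R ^ 2 + Q ^ 2) / 2) ∧
    (yQ < yR ↔ c ^ 2 + s ^ 2 < (R ^ 2 + Q ^ 2) / 2) ∧
    (yR < yQ ↔ (R ^ 2 + Q ^ 2) / 2 < c ^ 2 + s ^ 2) := by
  have hc₀ : c ≠ 0 := hc.ne'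
  have h_cmp : cmp yR yQ = cmp ((R ^ 2 + Q ^ 2) / 2) (c ^ 2 + s ^ 2) := by
    rw [hyR, hyQ,
      sSup_snd_image_eq_halfChord hc₀ (by linarith) (by linarith) (by linarith),
      sSup_snd_image_eq_halfChord hc₀ (by linarith) (by linarith) (by linarith)]
    exact cmp_halfChord hc₀ (pow_lt_pow_left₀ hRQ hR.le two_ne_zero)
      (halfChordSq_nonneg hc₀ (by linarith) (by linarith) (by linarith))
      (halfChordSq_nonneg hc₀ (by linarith) (by linarith) (by linarith))
  exact ⟨(eq_iff_eq_of_cmp_eq_cmp h_cmp).trans eq_comm,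
    lt_iff_lt_of_cmp_eq_cmp (cmp_eq_cmp_symm.1 h_cmp), lt_iff_lt_of_cmp_eq_cmp h_cmp⟩
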